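/- Suppose F is ε-approximately diminishing returns with respect to f. Let x and o' be k-states with x ⪯ o', let e, u ∈ V satisfy x e = x u = 0 and o' e = o' u = 0, let i, ℓ ∈ {1,…,k}, and assume the greedy-choice inequality Δ_{e,i}F(x) ≥ Δ_{u,ℓ}F(x). Then (1/(1−ε))·(F(x+(e,i)) − F(x)) ≥ (1/(1+ε))·(F(o'+(u,ℓ)) − F(o'+(e,i))). (This is the single-step inequality used in the ε-ADR analysis of k-Greedy-TS, where x plays the role of x⁽ʲ⁻¹⁾, o' of o⁽ʲ⁻¹ᐟ²⁾, (e,i) of the greedily selected pair, and (u,ℓ) of the displaced optimal assignment.) -/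

import Mathlib

/-!
The quantity separating the two sides is the marginal gain of `(u, l)` under `f` at `o'`.
On the left, greediness passes from `(e, i)` to `(u, l)` at `x`, the lower ADR bound passes from
`F` to `f` at the cost of a factor `1 - ε`, and diminishing returns pass from `x` to `o'`.
On the right, `F (o' + (u, l)) - F (o' + (e, i))` is a difference of two marginal gains of `F`
at `o'`; the subtracted one is nonnegative because `f` is monotone and `ε < 1`, and the other is at
most `1 + ε` times the marginal gain under `f`.
-/

/-- The support of a `k`-state: elements assigned a nonzero value. -/
def supp {V : Type*} [Fintype V] {k : ℕ} [DecidableEq V] (x : V → Fin (k+1)) : Finset V :=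
  Finset.univ.filter (fun e => x e ≠ 0)

/-- The `i`-th support of a `k`-state: elements assigned value `i`. -/
def suppi {V : Type*} [Fintype V] {k : ℕ} [DecidableEq V] (x : V → Fin (k+1)) (i : Fin (k+1)) :
    Finset V :=
  Finset.univ.filter (fun e => x e = i)

/-- The partial order on `k`-states: `y` agrees with `x` on the support of `x`. -/
def kle {V : Type*} {k : ℕ} (x y : V → Fin (k+1)) : Prop :=
  ∀ e, x e ≠ 0 → y e = x e

/-- `kadd x e i` is the `k`-state agreeing with `x` except that `e` is assigned `i`. -/
def kadd {V : Type*} [DecidableEq V] {k : ℕ} (x : V → Fin (k+1)) (e : V) (i : Fin (k+1)) :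
    V → Fin (k+1) :=
  Function.update x e i

/-- The marginal gain `Δ_{e,i} g (x) = g(x + (e,i)) - g(x)`. -/
def marg {V : Type*} [DecidableEq V] {k : ℕ} (g : (V → Fin (k+1)) → ℝ) (e : V)
    (i : Fin (k+1)) (x : V → Fin (k+1)) : ℝ :=
  g (kadd x e i) - g x

/-- `f` is monotone and satisfies the diminishing returns property (monotone k-submodular). -/
def KSubmodular {V : Type*} [Fintype V] [DecidableEq V] {k : ℕ}
    (f : (V → Fin (k+1)) → ℝ) : Prop :=
  (∀ x y : V → Fin (k+1), kle x y → f x ≤ f y) ∧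
  (∀ x y : V → Fin (k+1), kle x y → ∀ e, e ∉ supp y → ∀ i : Fin (k+1), i ≠ 0 →
    marg f e i x ≥ marg f e i y)

/-- `F` is ε-approximately k-submodular (ε-AS) with respect to `f`. -/
def EpsAS {V : Type*} [Fintype V] [DecidableEq V] {k : ℕ} (ε : ℝ)
    (F f : (V → Fin (k+1)) → ℝ) : Prop :=
  (∀ x, 0 ≤ f x) ∧ KSubmodular f ∧ f (fun _ => (0 : Fin (k+1))) = 0 ∧
  (∀ x : V → Fin (k+1), (1 - ε) * f x ≤ F x ∧ F x ≤ (1 + ε) * f x)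

/-- `F` is ε-approximately diminishing returns (ε-ADR) with respect to `f`. -/
def EpsADR {V : Type*} [Fintype V] [DecidableEq V] {k : ℕ} (ε : ℝ)
    (F f : (V → Fin (k+1)) → ℝ) : Prop :=
  (∀ x, 0 ≤ f x) ∧ KSubmodular f ∧ f (fun _ => (0 : Fin (k+1))) = 0 ∧
  (∀ x : V → Fin (k+1), ∀ e, e ∉ supp x → ∀ i : Fin (k+1), i ≠ 0 →
    (1 - ε) * marg f e i x ≤ marg F e i x ∧ marg F e i x ≤ (1 + ε) * marg f e i x)

/-- A greedy TS sequence of length `B` for `G` (run of k-Greedy-TS on `G` with budget `B`). -/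
def GreedyTS {V : Type*} [Fintype V] [DecidableEq V] {k : ℕ}
    (G : (V → Fin (k+1)) → ℝ) (B : ℕ) (x : ℕ → V → Fin (k+1))
    (es : ℕ → V) (is : ℕ → Fin (k+1)) : Prop :=
  x 0 = (fun _ => (0 : Fin (k+1))) ∧
  ∀ j, 1 ≤ j → j ≤ B →
    es j ∉ supp (x (j-1)) ∧ is j ≠ 0 ∧
    x j = kadd (x (j-1)) (es j) (is j) ∧
    (∀ e, e ∉ supp (x (j-1)) → ∀ i : Fin (k+1), i ≠ 0 →
      marg G (es j) (is j) (x (j-1)) ≥ marg G e i (x (j-1)))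

/-- A greedy IS sequence for `G` with individual budgets `Bv` (run of k-Greedy-IS on `G`). -/
def GreedyIS {V : Type*} [Fintype V] [DecidableEq V] {k : ℕ}
    (G : (V → Fin (k+1)) → ℝ) (Bv : Fin (k+1) → ℕ) (B : ℕ) (x : ℕ → V → Fin (k+1))
    (es : ℕ → V) (is : ℕ → Fin (k+1)) : Prop :=
  x 0 = (fun _ => (0 : Fin (k+1))) ∧
  ∀ j, 1 ≤ j → j ≤ B →
    es j ∉ supp (x (j-1)) ∧ is j ≠ 0 ∧
    (suppi (x (j-1)) (is j)).card < Bv (is j) ∧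
    x j = kadd (x (j-1)) (es j) (is j) ∧
    (∀ e, e ∉ supp (x (j-1)) → ∀ i : Fin (k+1), i ≠ 0 →
      (suppi (x (j-1)) i).card < Bv i →
      marg G (es j) (is j) (x (j-1)) ≥ marg G e i (x (j-1)))

theorem kle_kadd {V : Type*} [DecidableEq V] {k : ℕ} (x : V → Fin (k+1)) (e : V)
    (i : Fin (k+1)) (hxe : x e = 0) : kle x (kadd x e i) := by
  intro a ha
  have hae : a ≠ e := fun h => ha (h ▸ hxe)
  simp [kadd, hae]

/-- single-step inequality in the ε-ADR analysis of k-Greedy-TS. -/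
theorem stmt7 {V : Type*} [Fintype V] [DecidableEq V] {k : ℕ} (hk : 1 ≤ k)
    (ε : ℝ) (hε0 : 0 < ε) (hε1 : ε < 1)
    (F f : (V → Fin (k+1)) → ℝ)
    (hADR : EpsADR ε F f)
    (x o' : V → Fin (k+1)) (hxo : kle x o')
    (e u : V) (hxe : x e = 0) (hxu : x u = 0) (hoe : o' e = 0) (hou : o' u = 0)
    (i l : Fin (k+1)) (hi : i ≠ 0) (hl : l ≠ 0)
    (hgr : marg F e i x ≥ marg F u l x) :
    (1 / (1 - ε)) * (F (kadd x e i) - F x) ≥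
      (1 / (1 + ε)) * (F (kadd o' u l) - F (kadd o' e i)) := by 
  obtain ⟨-, ⟨hmono, hdr⟩, -, hF⟩ := hADR
  have hxu' : u ∉ supp x := by simp [supp, hxu]
  have hoe' : e ∉ supp o' := by simp [supp, hoe]
  have hou' : u ∉ supp o' := by simp [supp, hou]
  have hpos : 0 < 1 - ε := by linarith
  have hdim : marg f u l x ≥ marg f u l o' := hdr x o' hxo u hou' l hl
  have hleft : (1 - ε) * marg f u l o' ≤ F (kadd x e i) - F x :=
    calc (1 - ε) * marg f u l o' ≤ (1 - ε) * marg f u l x :=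
          mul_le_mul_of_nonneg_left hdim hpos.le
      _ ≤ marg F u l x := (hF x u hxu' l hl).1
      _ ≤ F (kadd x e i) - F x := hgr
  have hgain : 0 ≤ marg F e i o' :=
    (mul_nonneg hpos.le (sub_nonneg.2 (hmono _ _ (kle_kadd o' e i hoe)))).trans
      (hF o' e hoe' i hi).1
  have hright : F (kadd o' u l) - F (kadd o' e i) ≤ (1 + ε) * marg f u l o' := by
    have h := (hF o' u hou' l hl).2
    unfold marg at h hgain ⊢
    linarith
  calc (1 / (1 + ε)) * (F (kadd o' u l) - F (kadd o' e i)) ≤ marg f u l o' := by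
        rw [one_div_mul_eq_div, div_le_iff₀' (by linarith)]
        exact hright
    _ ≤ (1 / (1 - ε)) * (F (kadd x e i) - F x) := by
        rw [one_div_mul_eq_div, le_div_iff₀' hpos]
        exact hleft
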